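/- Let n ≥ 1, let w ∈ ℝⁿ with w₁ ≥ … ≥ wₙ ≥ 0, and let x ∈ ℝⁿ be such that the absolute values |x₁|,…,|xₙ| are pairwise distinct; let σ be the permutation with |x_{σ(1)}| > … > |x_{σ(n)}|. For λ > 0, let u*_λ be the (unique) minimizer over u ∈ ℝⁿ of u ↦ (1/(2λ))‖x − u‖₂² + Σ_{i=1}^n wᵢ · ((u²)_[i] / 2), where (u²)_[i] is the i-th largest value among u₁²,…,uₙ², and define the relaxed top-k-in-magnitude output y*_λ := (x − u*_λ)/λ. Then there exists λ₀ > 0 such that for all 0 < λ < λ₀: (i) for every i, (y*_λ)ᵢ = w_{σ⁻¹(i)} · xᵢ / (λ · w_{σ⁻¹(i)} + 1); and (ii) ‖y*_λ − w_{σ⁻¹} ∘ x‖_∞ ≤ ‖w‖_∞ · ‖x‖_∞ · max_{1≤i≤n} ( λwᵢ / (λwᵢ + 1) ), where (w_{σ⁻¹} ∘ x)ᵢ = w_{σ⁻¹(i)} xᵢ. In particular, if w = 1_k then ‖y*_λ − topkmag(x)‖_∞ ≤ λ‖x‖_∞, where topkmag(x)ᵢ = xᵢ if |xᵢ| is among the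 k largest absolute values and 0 otherwise. -/

import Mathlib

/-!
Write `p i = w (σ⁻¹ i)`. By the rearrangement inequality (`sum_perm_le_sum_sortDesc`), replacing
`∑ wᵢ (u²)_[i]` by `∑ wᵢ u_{σ(i)}²` can only lower the objective. The lowered objective is
separable, and coordinate `i` is minimized at `vᵢ = xᵢ / (λ pᵢ + 1)` (`prox_coord`). For small `λ`
the numbers `|v_{σ(i)}|` are still nonincreasing (`exists_order_preserved`), so at `v` the two
objectives agree (`sortDesc_eq_of_antitone`); hence `v` minimizes the original objective and equals
`u*_λ` by uniqueness. The error in coordinate `i` is then exactly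
`pᵢ |xᵢ| · λ pᵢ / (λ pᵢ + 1)`, and both bounds follow.
-/

/-- `sortDesc g i` is the `i`-th largest value (0-indexed) among the coordinates of `g`. -/
noncomputable def sortDesc {n : ℕ} (g : Fin n → ℝ) : Fin n → ℝ :=
  fun i => g (Tuple.sort g (Fin.rev i))

/-- `1_k ∈ ℝⁿ`: first `k` coordinates equal to `1`, the rest equal to `0`. -/
def onek (n k : ℕ) : Fin n → ℝ := fun i => if (i : ℕ) < k then 1 else 0

theorem sortDesc_antitone {n : ℕ} (g : Fin n → ℝ) : Antitone (sortDesc g) := by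
  intro i j hij
  exact Tuple.monotone_sort g (Fin.rev_le_rev.mpr hij)

/-- Any permutation that puts `g` in nonincreasing order computes the sorted values, ties
included. -/
theorem sortDesc_eq_of_antitone {n : ℕ} (g : Fin n → ℝ) (σ : Equiv.Perm (Fin n))
    (h : Antitone (g ∘ σ)) (i : Fin n) : sortDesc g i = g (σ i) := by
  have hm : Monotone (g ∘ (Fin.revPerm.trans σ : Equiv.Perm (Fin n))) := by
    intro a b hab
    exact h (Fin.rev_le_rev.mpr hab)
  have := congrFun (Tuple.unique_monotone (Tuple.monotone_sort g) hm) (Fin.rev i)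
  simpa [sortDesc] using this

/-- Rearrangement inequality: against nonincreasing weights, the decreasing arrangement of `g` gives
the largest weighted sum. -/
theorem sum_perm_le_sum_sortDesc {n : ℕ} (w g : Fin n → ℝ) (hw : Antitone w)
    (σ : Equiv.Perm (Fin n)) : ∑ i, w i * g (σ i) ≤ ∑ i, w i * sortDesc g i := by
  have h := (hw.monovary (sortDesc_antitone g)).sum_mul_comp_perm_le_sum_mul
    (σ := (σ.trans (Tuple.sort g).symm).trans Fin.revPerm)
  simpa [sortDesc] using h

/-- Minimality of `a / (lam * p + 1)` for the one-dimensional problem defining the proximal operator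
of `t ↦ p t² / 2`. -/
theorem prox_coord (lam p a t : ℝ) (hl : 0 < lam) (hp : 0 ≤ p) :
    1 / (2 * lam) * (a - a / (lam * p + 1)) ^ 2 + p * ((a / (lam * p + 1)) ^ 2 / 2) ≤
      1 / (2 * lam) * (a - t) ^ 2 + p * (t ^ 2 / 2) := by
  have hd : 0 < lam * p + 1 := by positivity
  have key : 1 / (2 * lam) * (a - t) ^ 2 + p * (t ^ 2 / 2) -
      (1 / (2 * lam) * (a - a / (lam * p + 1)) ^ 2 + p * ((a / (lam * p + 1)) ^ 2 / 2)) =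
      (lam * p + 1) / (2 * lam) * (t - a / (lam * p + 1)) ^ 2 := by
    field_simp
    ring
  have : 0 ≤ (lam * p + 1) / (2 * lam) * (t - a / (lam * p + 1)) ^ 2 := by positivity
  linarith

/-- A strictly decreasing family stays decreasing after division by `lam * w i + 1`, uniformly for
small `lam`. -/
theorem exists_order_preserved {n : ℕ} (w a : Fin n → ℝ) (hw0 : ∀ i, 0 ≤ w i)
    (ha : ∀ i j, i < j → a j < a i) :
    ∃ lam0 : ℝ, 0 < lam0 ∧ ∀ lam : ℝ, 0 < lam → lam < lam0 →
      Antitone fun i => a i / (lam * w i + 1) := by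
  have hev : ∀ᶠ lam in nhds (0 : ℝ), ∀ i j : Fin n, i < j →
      a j * (lam * w i + 1) < a i * (lam * w j + 1) := by
    refine Filter.eventually_all.mpr fun i => Filter.eventually_all.mpr fun j => ?_
    by_cases hij : i < j
    · have hc : ∀ᶠ lam in nhds (0 : ℝ), a j * (lam * w i + 1) < a i * (lam * w j + 1) :=
        ContinuousAt.eventually_lt (by fun_prop) (by fun_prop) (by simpa using ha i j hij)
      filter_upwards [hc] with lam h _ using h
    · exact Filter.Eventually.of_forall fun _ h => absurd h hij
  obtain ⟨ε, hε, h⟩ := Metric.eventually_nhds_iff.mp hev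
  refine ⟨ε, hε, fun lam h0 h1 i j hij => ?_⟩
  rcases hij.eq_or_lt with rfl | hij
  · exact le_rfl
  have hi : 0 < lam * w i + 1 := by have := hw0 i; positivity
  have hj : 0 < lam * w j + 1 := by have := hw0 j; positivity
  have hd : dist lam 0 < ε := by rwa [Real.dist_eq, sub_zero, abs_of_pos h0]
  change a j / (lam * w j + 1) ≤ a i / (lam * w i + 1)
  rw [div_le_div_iff₀ hj hi]
  exact (h hd i j hij).le

/-- The rank of `i` when the absolute values are sorted by `σ` is `σ⁻¹ i`, counted from zero. -/
theorem card_filter_abs_le {n : ℕ} (x : Fin n → ℝ) (σ : Equiv.Perm (Fin n))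
    (hσ : ∀ i j : Fin n, i < j → |x (σ j)| < |x (σ i)|) (i : Fin n) :
    (Finset.univ.filter fun j => |x i| ≤ |x j|).card = (σ.symm i : ℕ) + 1 := by
  have hanti : StrictAnti fun j => |x (σ j)| := fun a b hab => hσ a b hab
  have : (Finset.univ.filter fun j => |x i| ≤ |x j|) =
      (Finset.Iic (σ.symm i)).map σ.toEmbedding := by
    ext j
    have := hanti.le_iff_ge (a := σ.symm i) (b := σ.symm j)
    simp only [Equiv.apply_symm_apply] at this
    simp [this]
  rw [this, Finset.card_map, Fin.card_Iic]

/-- Approximation error of the relaxed top-k-in-magnitude operator for small `λ`: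
with `u*_λ` the unique minimizer of `u ↦ (1/(2λ))‖x − u‖² + ∑ wᵢ (u²)_[i]/2` and
`y*_λ = (x − u*_λ)/λ`, for all small enough `λ > 0` we have the closed form
`(y*_λ)ᵢ = w_{σ⁻¹(i)} xᵢ/(λ w_{σ⁻¹(i)} + 1)`, the bound
`‖y*_λ − w_{σ⁻¹} ∘ x‖_∞ ≤ ‖w‖_∞ ‖x‖_∞ maxᵢ (λwᵢ/(λwᵢ+1))`, and, when `w = 1_k`,
`‖y*_λ − topkmag(x)‖_∞ ≤ λ‖x‖_∞`. (The norm on `Fin n → ℝ` is the sup-norm.) -/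
theorem relaxed_topkmag_error (n k : ℕ) (hn : 1 ≤ n) (hk1 : 1 ≤ k) (hkn : k ≤ n)
    (w x : Fin n → ℝ) (hw : ∀ i j : Fin n, i ≤ j → w j ≤ w i) (hw0 : ∀ i, 0 ≤ w i)
    (hx : ∀ i j : Fin n, i ≠ j → |x i| ≠ |x j|)
    (σ : Equiv.Perm (Fin n)) (hσ : ∀ i j : Fin n, i < j → |x (σ j)| < |x (σ i)|)
    (ustar : ℝ → Fin n → ℝ)
    (hustar : ∀ lam : ℝ, 0 < lam → ∀ u : Fin n → ℝ, u ≠ ustar lam →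
      (1 / (2 * lam)) * (∑ i, (x i - ustar lam i) ^ 2) +
          (∑ i, w i * (sortDesc (fun j => (ustar lam j) ^ 2) i / 2)) <
        (1 / (2 * lam)) * (∑ i, (x i - u i) ^ 2) +
          (∑ i, w i * (sortDesc (fun j => (u j) ^ 2) i / 2))) :
    ∃ lam0 : ℝ, 0 < lam0 ∧ ∀ lam : ℝ, 0 < lam → lam < lam0 →
      (∀ i : Fin n,
        (x i - ustar lam i) / lam = w (σ.symm i) * x i / (lam * w (σ.symm i) + 1)) ∧
      ‖(fun i => (x i - ustar lam i) / lam - w (σ.symm i) * x i : Fin n → ℝ)‖ ≤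
        ‖w‖ * ‖x‖ * ‖(fun i => lam * w i / (lam * w i + 1) : Fin n → ℝ)‖ ∧
      (w = onek n k →
        ‖(fun i => (x i - ustar lam i) / lam -
            (if (Finset.univ.filter fun j => |x i| ≤ |x j|).card ≤ k then x i else 0) :
          Fin n → ℝ)‖ ≤ lam * ‖x‖) := by
  obtain ⟨lam0, hlam0, hord⟩ := exists_order_preserved w (fun i => |x (σ i)|) hw0 hσ
  refine ⟨lam0, hlam0, fun lam hl hl0 => ?_⟩
  have hd : ∀ i, 0 < lam * w i + 1 := fun i => by have := hw0 i; positivity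
  have hu : ustar lam = fun i => x i / (lam * w (σ.symm i) + 1) := by
    set v : Fin n → ℝ := fun i => x i / (lam * w (σ.symm i) + 1) with hv
    -- If `u*` differed from `v`, the strict inequality at `v` would contradict
    -- `objective v = separable objective v ≤ separable objective u* ≤ objective u*`.
    by_contra hne
    have hlt := hustar lam hl v (Ne.symm hne)
    have hvanti : Antitone ((fun j => v j ^ 2) ∘ σ) := by
      intro i j hij
      have h := hord lam hl hl0 hij
      have e : ∀ i, |v (σ i)| = |x (σ i)| / (lam * w i + 1) := fun i => by
        simp [hv, abs_div, abs_of_pos (hd i)]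
      exact sq_le_sq.mpr (by rw [e, e]; exact h)
    have h1 : ∑ i, w i * (sortDesc (fun j => v j ^ 2) i / 2) =
        ∑ i, w (σ.symm i) * (v i ^ 2 / 2) := by
      rw [← Equiv.sum_comp σ (fun i => w (σ.symm i) * (v i ^ 2 / 2))]
      simp [sortDesc_eq_of_antitone _ σ hvanti]
    have h2 : ∑ i, w (σ.symm i) * (ustar lam i ^ 2 / 2) ≤
        ∑ i, w i * (sortDesc (fun j => ustar lam j ^ 2) i / 2) := by
      have h := sum_perm_le_sum_sortDesc w (fun j => ustar lam j ^ 2) (fun i j hij => hw i j hij) σ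
      rw [← Equiv.sum_comp σ (fun i => w (σ.symm i) * (ustar lam i ^ 2 / 2))]
      simp only [Equiv.symm_apply_apply, ← mul_div_assoc, ← Finset.sum_div]
      linarith
    have h3 := Finset.sum_le_sum fun i (_ : i ∈ Finset.univ) =>
      prox_coord lam (w (σ.symm i)) (x i) (ustar lam i) hl (hw0 _)
    rw [Finset.sum_add_distrib, Finset.sum_add_distrib, ← Finset.mul_sum, ← Finset.mul_sum] at h3
    rw [h1] at hlt
    linarith
  have hy : ∀ i, (x i - ustar lam i) / lam = w (σ.symm i) * x i / (lam * w (σ.symm i) + 1) := by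
    intro i
    have := (hd (σ.symm i)).ne'
    rw [hu]
    field_simp
    ring
  have herr : ∀ i, ‖(x i - ustar lam i) / lam - w (σ.symm i) * x i‖ =
      w (σ.symm i) * ‖x i‖ * (lam * w (σ.symm i) / (lam * w (σ.symm i) + 1)) := by
    intro i
    have h0 := hw0 (σ.symm i)
    have hp := hd (σ.symm i)
    have e : (x i - ustar lam i) / lam - w (σ.symm i) * x i =
        -(w (σ.symm i) * x i * (lam * w (σ.symm i) / (lam * w (σ.symm i) + 1))) := by
      rw [hy]
      field_simp
      ring
    have hq : 0 ≤ lam * w (σ.symm i) / (lam * w (σ.symm i) + 1) := by positivity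
    rw [e, norm_neg, norm_mul, norm_mul, Real.norm_of_nonneg h0, Real.norm_of_nonneg hq]
  refine ⟨hy, ?_, fun hwk => ?_⟩
  · refine (pi_norm_le_iff_of_nonneg (by positivity)).mpr fun i => ?_
    rw [herr]
    have h0 := hw0 (σ.symm i)
    have hp := hd (σ.symm i)
    have hwn : w (σ.symm i) ≤ ‖w‖ := (le_abs_self _).trans (norm_le_pi_norm w (σ.symm i))
    have hqn : lam * w (σ.symm i) / (lam * w (σ.symm i) + 1) ≤
        ‖(fun i => lam * w i / (lam * w i + 1) : Fin n → ℝ)‖ :=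
      (le_abs_self _).trans
        (norm_le_pi_norm (fun i => lam * w i / (lam * w i + 1) : Fin n → ℝ) (σ.symm i))
    have hxn := norm_le_pi_norm x i
    gcongr
  · refine (pi_norm_le_iff_of_nonneg (by positivity)).mpr fun i => ?_
    have e : (if (Finset.univ.filter fun j => |x i| ≤ |x j|).card ≤ k then x i else 0) =
        w (σ.symm i) * x i := by
      rw [card_filter_abs_le x σ hσ, hwk]
      simp [onek]
    rw [e, herr]
    have h0 := hw0 (σ.symm i)
    have hp := hd (σ.symm i)
    have h1 : w (σ.symm i) ≤ 1 := by
      rw [hwk]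
      simp only [onek]
      split_ifs <;> norm_num
    have hq : lam * w (σ.symm i) / (lam * w (σ.symm i) + 1) ≤ lam := by
      rw [div_le_iff₀ hp]
      nlinarith [mul_nonneg hl.le (mul_nonneg hl.le h0), mul_le_mul_of_nonneg_left h1 hl.le]
    calc _ ≤ 1 * ‖x‖ * lam := by
          have := norm_le_pi_norm x i
          gcongr
      _ = lam * ‖x‖ := by ring
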